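/- Let n ≥ 2 and let 𝒜 be a malnormal subgroup system of F_n. Then the action of F_n on ∂²(F_n,𝒜) has a dense orbit: there exists x ∈ ∂²(F_n,𝒜) whose F_n-orbit is dense in ∂²(F_n,𝒜). -/

import Mathlib

/-!
The orbit is that of `{ξ, η}`, where `ξ` is a generic point of `∂F_n` and `η` is any point whose
first letter differs from that of `ξ`; it is even dense in the whole of `∂²F_n`.

For density it suffices that every reduced word occurs in `ξ`. Given distinct points `p u ⋯` and
`p v ⋯` with longest common prefix `p`, the word `v⁻¹ u` is reduced, so `ξ` starts with `a v⁻¹ u`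
for some `a`. Then `g = p v a⁻¹` sends `ξ` to `p u ⋯` and `η` to `p v a⁻¹ η`, where nothing cancels
because `ξ` and `η` have different first letters.

The orbit stays in `∂²(F_n,𝒜)` as soon as no translate of `ξ` lies in the limit set of a conjugate
of some `A i`. A finitely generated subgroup is quasiconvex, so it is enough that the prefixes of
`ξ` leave every finite union of double cosets `s (A i) t` infinitely often.

By the Baire category theorem both properties are generic: each is a countable family of conditions
that any finite reduced word can be extended to satisfy. For the second one, if all reduced
extensions of some word were in `S (A i) T` with `S` and `T` finite, then `F_n` would be a finite
union of double cosets of that kind, hence of cosets of conjugates of `A i`, and B. H. Neumann's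
lemma would give `A i` finite index. A proper malnormal subgroup of an infinite group has infinite
index, since otherwise it would meet one of its conjugates in a subgroup of finite index.
-/

open scoped Classical
open MeasureTheory

noncomputable section

namespace RelCurr

/-- The alphabet `𝔄 = ℬ ∪ ℬ⁻¹`: a letter is a generator together with a sign. -/
abbrev Letter (n : ℕ) := Fin n × Bool

/-- The inverse of a letter. -/
def linv {n : ℕ} (x : Letter n) : Letter n := (x.1, !x.2)

/-- The free group of rank `n` on the basis `Fin n`. -/
abbrev F (n : ℕ) := FreeGroup (Fin n)

/-- The reduced word of an element of `F n`. -/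
def rword {n : ℕ} (g : F n) : List (Letter n) := FreeGroup.toWord g

/-- The length `|g|` of the reduced word of `g`. -/
def wlen {n : ℕ} (g : F n) : ℕ := (rword g).length

/-- The single-letter element of `F n` given by a letter. -/
def letterE {n : ℕ} (b : Letter n) : F n := FreeGroup.mk [b]

/-- The conjugate subgroup `g A g⁻¹`. -/
def conjSub {n : ℕ} (g : F n) (A : Subgroup (F n)) : Subgroup (F n) :=
  Subgroup.map (MulAut.conj g).toMonoidHom A

/-- A subgroup `A` is malnormal if `xAx⁻¹ ∩ A = {1}` for every `x ∉ A`. -/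
def Malnormal {n : ℕ} (A : Subgroup (F n)) : Prop :=
  ∀ x : F n, x ∉ A → conjSub x A ⊓ A = ⊥

/-- The word metric on the Cayley tree `T`. -/
def dist' {n : ℕ} (x y : F n) : ℕ := wlen (x⁻¹ * y)

/-- The cyclically reduced length of `a`. -/
def cycLen {n : ℕ} (a : F n) : ℕ := sInf { m | ∃ h : F n, wlen (h⁻¹ * a * h) = m }

/-- The vertex set of the minimal `A`-invariant subtree `T_A` of the Cayley tree:
the union of the axes of the nontrivial elements of `A`. -/
def treeVerts {n : ℕ} (A : Subgroup (F n)) : Set (F n) :=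
  { h | ∃ a ∈ A, a ≠ 1 ∧ wlen (h⁻¹ * a * h) = cycLen a }

/-- `γ_w ⊆ S`: every prefix of the reduced word of `w` lies in the vertex set `S`. -/
def pathIn {n : ℕ} (w : F n) (S : Set (F n)) : Prop :=
  ∀ m ≤ wlen w, FreeGroup.mk ((rword w).take m) ∈ S

/-- An element is cyclically reduced if the last letter of its reduced word is not the
inverse of the first letter. -/
def CyclicallyReduced {n : ℕ} (w : F n) : Prop :=
  ∀ x y : Letter n, (rword w).head? = some x → (rword w).getLast? = some y → y ≠ linv x

/-- `v` is a length-one extension of `w`. -/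
def LengthOneExt {n : ℕ} (w v : F n) : Prop :=
  ∃ b : Letter n, v = w * letterE b ∧ wlen v = wlen w + 1

/-- `a` is an extension of `w`: the reduced word of `w` is a proper prefix of that of `a`. -/
def ExtensionOf {n : ℕ} (w a : F n) : Prop :=
  rword w <+: rword a ∧ wlen w < wlen a

/-- `g` is a proper power. -/
def IsProperPower {n : ℕ} (g : F n) : Prop := ∃ (h : F n) (k : ℕ), 2 ≤ k ∧ g = h ^ k

section System

variable {n r : ℕ} (A : Fin r → Subgroup (F n))

/-- `[B] ∈ 𝒜`, i.e. `B` is a conjugate of one of the subgroups of the system. -/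
def InSystem (B : Subgroup (F n)) : Prop := ∃ (i : Fin r) (g : F n), B = conjSub g (A i)

/-- The family `A` represents a subgroup system: finite rank subgroups distinct
from `{1}` and `F n`. -/
def IsSystem : Prop := (∀ i, (A i).FG) ∧ (∀ i, A i ≠ ⊥) ∧ (∀ i, A i ≠ ⊤)

/-- The subgroup system is malnormal. -/
def SystemMalnormal : Prop :=
  (∀ i, Malnormal (A i)) ∧
  ∀ B₁ B₂ : Subgroup (F n), InSystem A B₁ → InSystem A B₂ → B₁ ≠ B₂ → B₁ ⊓ B₂ = ⊥

/-- `g` is `𝒜`-peripheral: trivial or contained in a conjugate of one of the `A i`. -/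
def Peripheral (g : F n) : Prop := g = 1 ∨ ∃ B, InSystem A B ∧ g ∈ B

/-- The diameter of the intersection of the trees of two distinct subgroups of the
system is at most `L`. -/
def DiamBound (L : ℕ) : Prop :=
  ∀ B₁ B₂ : Subgroup (F n), InSystem A B₁ → InSystem A B₂ → B₁ ≠ B₂ →
    ∀ x ∈ treeVerts B₁ ∩ treeVerts B₂, ∀ y ∈ treeVerts B₁ ∩ treeVerts B₂, dist' x y ≤ L

/-- `B ∈ Γ_i`: `B` is a conjugate of `A i` whose tree contains the base point `1`. -/
def GammaMem (i : Fin r) (B : Subgroup (F n)) : Prop :=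
  (∃ g : F n, B = conjSub g (A i)) ∧ (1 : F n) ∈ treeVerts B

/-- The finite set `𝒞` of words of length `L+2` whose path is contained in no tree
`T_B` with `B ∈ Γ_i`, for every `i`. -/
def Ccal (L : ℕ) : Set (F n) :=
  { w | wlen w = L + 2 ∧ ∀ (i : Fin r) (B : Subgroup (F n)), GammaMem A i B →
      ¬ pathIn w (treeVerts B) }

/-- `F_n − 𝒜`: the words containing an element of `𝒞` as a contiguous subword. -/
def FmA (L : ℕ) : Set (F n) := { w | ∃ x ∈ Ccal A L, rword x <:+: rword w }

/-- `S_k`: words of length `k` not containing any element of `𝒞` as a subword. -/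
def Sk (L k : ℕ) : Set (F n) := { w | wlen w = k ∧ w ∉ FmA A L }

end System

/-! ### The boundary of `F n` -/

/-- An infinite reduced word. -/
def IsRed {n : ℕ} (ξ : ℕ → Letter n) : Prop := ∀ i, ξ (i + 1) ≠ linv (ξ i)

/-- The Gromov boundary `∂F_n`, realized as the space of infinite reduced words,
topologized as a subspace of the product space. -/
def Boundary (n : ℕ) : Type := { ξ : ℕ → Letter n // IsRed ξ }

instance {n : ℕ} : TopologicalSpace (Boundary n) :=
  instTopologicalSpaceSubtype

/-- The length-`m` prefix of a boundary point. -/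
def bpre {n : ℕ} (ξ : Boundary n) (m : ℕ) : List (Letter n) :=
  (List.range m).map ξ.1

/-- The reduced word of `w` is a prefix of the infinite word `ξ`. -/
def wordPrefixOf {n : ℕ} (w : F n) (ξ : Boundary n) : Prop :=
  bpre ξ (wlen w) = rword w

/-- The boundary (limit set) `∂A ⊆ ∂F_n` of a subgroup `A`. -/
def limitSet {n : ℕ} (A : Subgroup (F n)) : Set (Boundary n) :=
  { ξ | ∀ m : ℕ, ∃ a ∈ A, bpre ξ m <+: rword a }

/-- `ξ = g^{+∞}`: `ξ` is the limit of the reduced words of the powers of `g`. -/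
def IsPosLimit {n : ℕ} (g : F n) (ξ : Boundary n) : Prop :=
  ∀ m : ℕ, ∃ N : ℕ, ∀ k ≥ N, bpre ξ m <+: rword (g ^ k)

/-- The number of letters cancelled when concatenating the word `l` with the
infinite reduced word `ξ`. -/
def cancelLen {n : ℕ} (l : List (Letter n)) (ξ : ℕ → Letter n) : ℕ :=
  sSup { j | j ≤ l.length ∧ ∀ i < j, l.reverse[i]? = some (linv (ξ i)) }

/-- The sequence underlying the action of `g` on a boundary point: left multiplication
followed by cancellation. -/
def actSeq {n : ℕ} (g : F n) (ξ : ℕ → Letter n) : ℕ → Letter n :=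
  fun m =>
    if h : m < (rword g).length - cancelLen (rword g) ξ then
      (rword g).get ⟨m, by omega⟩
    else ξ (m - ((rword g).length - cancelLen (rword g) ξ) + cancelLen (rword g) ξ)

/-- The action of `F n` on its boundary: left multiplication followed by cancellation.
(The sequence `actSeq g ξ.1` is always reduced, so the first branch always applies.) -/
def bAct {n : ℕ} (g : F n) (ξ : Boundary n) : Boundary n :=
  if h : IsRed (actSeq g ξ.1) then ⟨actSeq g ξ.1, h⟩ else ξ

/-! ### The double boundary -/

/-- The diagonal action of `F n` on `Sym2 (∂F_n)`, whose restriction to the set of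
non-diagonal classes is the action on the double boundary `∂²F_n`. -/
def dbAct {n : ℕ} (g : F n) : Sym2 (Boundary n) → Sym2 (Boundary n) := Sym2.map (bAct g)

/-- `∂²𝒜`: the classes `{ξ,η}` with both endpoints in `g·∂A_i = ∂(gA_ig⁻¹)` for some
`i` and `g`. -/
def dblBndA {n r : ℕ} (A : Fin r → Subgroup (F n)) : Set (Sym2 (Boundary n)) :=
  { z | ∃ (i : Fin r) (g : F n) (ξ η : Boundary n), z = s(ξ, η) ∧
      ξ ∈ limitSet (conjSub g (A i)) ∧ η ∈ limitSet (conjSub g (A i)) }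

/-- The double boundary `∂²(F_n,𝒜)` of `F n` relative to `𝒜`, as a subset of
`Sym2 (∂F_n)`: non-diagonal classes not lying in `∂²𝒜`. -/
def relSet {n r : ℕ} (A : Fin r → Subgroup (F n)) : Set (Sym2 (Boundary n)) :=
  { z | ¬ z.IsDiag } \ dblBndA A

/-- The cylinder set `C(γ_w) ⊆ ∂²F_n` of the geodesic path from `1` to `w`. -/
def cylinder {n : ℕ} (w : F n) : Set (Sym2 (Boundary n)) :=
  { z | ∃ ξ η : Boundary n, z = s(ξ, η) ∧ ξ.1 0 ≠ η.1 0 ∧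
      (wordPrefixOf w ξ ∨ wordPrefixOf w η) }

instance {n : ℕ} : MeasurableSpace (Sym2 (Boundary n)) := borel _

/-- The action of `g ∈ F n` on `∂²(F_n,𝒜)`. (The action of `F n` preserves
`∂²(F_n,𝒜)`, so the first branch always applies.) -/
def relAct {n r : ℕ} (A : Fin r → Subgroup (F n)) (g : F n) (z : ↥(relSet A)) :
    ↥(relSet A) :=
  if h : dbAct g z.1 ∈ relSet A then ⟨dbAct g z.1, h⟩ else z

/-- The cylinder `C(γ_w)` as a subset of `∂²(F_n,𝒜)`. -/
def relCyl {n r : ℕ} (A : Fin r → Subgroup (F n)) (w : F n) : Set ↥(relSet A) :=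
  Subtype.val ⁻¹' cylinder w

/-- The translated cylinder `g·C(γ_w)` as a subset of `∂²(F_n,𝒜)`. -/
def relCylG {n r : ℕ} (A : Fin r → Subgroup (F n)) (g w : F n) : Set ↥(relSet A) :=
  Subtype.val ⁻¹' (dbAct g '' cylinder w)

/-- A relative current on `(F_n,𝒜)`: an `F_n`-invariant Radon measure on the
locally compact space `∂²(F_n,𝒜)` (finite on compacts, outer regular, inner regular
on open sets). -/
def IsRelCurrent {n r : ℕ} (A : Fin r → Subgroup (F n)) (μ : Measure ↥(relSet A)) : Prop :=
  (∀ (g : F n) (s : Set ↥(relSet A)), MeasurableSet s → μ (relAct A g ⁻¹' s) = μ s) ∧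
  μ.Regular

/-- The `F_n`-orbit of a point of `Sym2 (∂F_n)`, inside `∂²(F_n,𝒜)`. -/
def orbitOf {n r : ℕ} (A : Fin r → Subgroup (F n)) (z : Sym2 (Boundary n)) :
    Set ↥(relSet A) :=
  { y | ∃ h : F n, (y : Sym2 (Boundary n)) = dbAct h z }

/-! ### Reduced words -/

section Words

variable {α : Type*} {p q s l l₁ l₂ : List (α × Bool)}

theorem isReduced_invRev (h : FreeGroup.IsReduced l) :
    FreeGroup.IsReduced (FreeGroup.invRev l) := by
  classical
  rw [FreeGroup.isReduced_iff_reduce_eq, FreeGroup.reduce_invRev, h.reduce_eq]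

theorem isReduced_invRev_append (h₁ : FreeGroup.IsReduced l₁) (h₂ : FreeGroup.IsReduced l₂)
    (h : ∀ x ∈ l₁.head?, ∀ y ∈ l₂.head?, x ≠ y) :
    FreeGroup.IsReduced (FreeGroup.invRev l₁ ++ l₂) := by
  refine List.isChain_append.2 ⟨isReduced_invRev h₁, h₂, fun x hx y hy hxy => ?_⟩
  obtain ⟨z, hz, rfl⟩ : ∃ z ∈ l₁.head?, (z.1, !z.2) = x := by
    simpa [FreeGroup.invRev] using hx
  have hne : z.2 ≠ y.2 := fun h' => h z hz y hy (Prod.ext hxy h')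
  exact Bool.not_eq.2 hne

theorem isReduced_append_replicate_getLast (h : FreeGroup.IsReduced l) (hl : l ≠ []) (j : ℕ) :
    FreeGroup.IsReduced (l ++ List.replicate j (l.getLast hl)) := by
  refine List.isChain_append.2 ⟨h, List.isChain_replicate_of_rel j fun _ => rfl, ?_⟩
  intro x hx y hy _
  rw [List.getLast?_eq_getLast_of_ne_nil hl, Option.mem_some_iff] at hx
  rw [← hx, List.eq_of_mem_replicate (List.mem_of_mem_head? hy)]

theorem exists_letter_between [Nontrivial α] (x y : α × Bool) :
    ∃ c : α × Bool, (x.1 = c.1 → x.2 = c.2) ∧ (c.1 = y.1 → c.2 = y.2) := by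
  by_cases hxy : x.1 = y.1
  · obtain ⟨a, ha⟩ := exists_ne x.1
    exact ⟨(a, true), fun h => absurd h.symm ha, fun h => absurd (h.trans hxy.symm) ha⟩
  · exact ⟨x, fun _ => rfl, fun h => absurd h hxy⟩

theorem exists_isReduced_append_cons [Nontrivial α] (hp : FreeGroup.IsReduced p)
    (hs : FreeGroup.IsReduced s) : ∃ c, FreeGroup.IsReduced (p ++ c :: s) := by
  obtain ⟨a⟩ := (inferInstance : Nonempty α)
  obtain ⟨c, hpc, hcs⟩ :=
    exists_letter_between (p.getLast?.getD (a, true)) (s.head?.getD (a, true))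
  refine ⟨c, List.isChain_append.2 ⟨hp, List.isChain_cons.2 ⟨fun y hy => ?_, hs⟩, ?_⟩⟩
  · rwa [Option.mem_def.1 hy] at hcs
  · rintro x hx y ⟨⟩
    rwa [Option.mem_def.1 hx] at hpc

theorem exists_cancellation (h₁ : FreeGroup.IsReduced l₁) (h₂ : FreeGroup.IsReduced l₂) :
    ∃ p c s, l₁ = p ++ c ∧ l₂ = FreeGroup.invRev c ++ s ∧ FreeGroup.IsReduced (p ++ s) := by
  induction l₁ using List.reverseRecOn generalizing l₂ with
  | nil => exact ⟨[], [], l₂, rfl, rfl, h₂⟩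
  | append_singleton l x ih =>
    by_cases hx : FreeGroup.IsReduced ((l ++ [x]) ++ l₂)
    · exact ⟨l ++ [x], [], l₂, (List.append_nil _).symm, rfl, hx⟩
    · obtain ⟨y, hy, hxy, hxy'⟩ : ∃ y ∈ l₂.head?, x.1 = y.1 ∧ x.2 ≠ y.2 := by
        by_contra! hno
        refine hx (List.isChain_append.2 ⟨h₁, h₂, fun x' hx' y hy => ?_⟩)
        obtain rfl : x = x' := by simpa using hx'
        exact hno y hy
      obtain ⟨t, rfl⟩ := List.head?_eq_some_iff.1 hy
      obtain ⟨p, c, s, rfl, rfl, hps⟩ :=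
        ih (l₂ := t) (h₁.infix ⟨[], [x], rfl⟩) (h₂.infix ⟨[y], [], by simp⟩)
      refine ⟨p, c ++ [x], s, by simp, ?_, hps⟩
      have hinv : FreeGroup.invRev [x] = [y] := by
        simp [FreeGroup.invRev, hxy, Bool.not_eq.2 hxy']
      simp [FreeGroup.invRev_append, hinv]

variable [DecidableEq α]

theorem toWord_mk_of_isReduced (h : FreeGroup.IsReduced l) :
    (FreeGroup.mk l).toWord = l := by
  rw [FreeGroup.toWord_mk, h.reduce_eq]

-- In the Cayley tree: the geodesic from `1` to `xy` lies in the union of the geodesic from `1`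
-- to `x` and the translate by `x` of the geodesic from `1` to `y`.
theorem prefix_toWord_mul {x y : FreeGroup α} (hq : q <+: (x * y).toWord) :
    q <+: x.toWord ∨
      ∃ q', q' <+: y.toWord ∧ FreeGroup.mk q = x * FreeGroup.mk q' := by
  obtain ⟨p, c, s, hx, hy, hps⟩ :=
    exists_cancellation (FreeGroup.isReduced_toWord (x := x)) (FreeGroup.isReduced_toWord (x := y))
  have hx' : x = FreeGroup.mk p * FreeGroup.mk c := by
    rw [FreeGroup.mul_mk, ← hx, FreeGroup.mk_toWord]
  have hy' : y = (FreeGroup.mk c)⁻¹ * FreeGroup.mk s := by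
    rw [FreeGroup.inv_mk, FreeGroup.mul_mk, ← hy, FreeGroup.mk_toWord]
  have hxy : (x * y).toWord = p ++ s := by
    rw [← toWord_mk_of_isReduced hps, hx', hy', ← FreeGroup.mul_mk]
    group
  rw [hxy] at hq
  rcases List.prefix_or_prefix_of_prefix hq (List.prefix_append p s) with hqp | ⟨t, rfl⟩
  · exact Or.inl (hqp.trans (hx ▸ List.prefix_append p c))
  · refine Or.inr ⟨FreeGroup.invRev c ++ t, ?_, ?_⟩
    · rw [hy]
      exact (List.prefix_append_right_inj _).2 ((List.prefix_append_right_inj p).1 hq)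
    · rw [hx', ← FreeGroup.mul_mk, ← FreeGroup.mul_mk, ← FreeGroup.inv_mk]
      group

end Words

/-! ### Subgroups of infinite index and quasiconvexity -/

section Cosets

open scoped Pointwise

variable {G : Type*} [Group G]

-- A double coset `sBt` is a left coset of the conjugate `t⁻¹Bt`, so Neumann's lemma applies.
theorem finiteIndex_of_mul_mul_eq_univ {B : Subgroup G} {S T : Finset G}
    (h : (S * B * T : Set G) = Set.univ) : B.FiniteIndex := by
  let C (x : G × G) : Subgroup G := B.map (MulAut.conj x.2⁻¹).toMonoidHom
  have hcover : ⋃ x ∈ S ×ˢ T, (x.1 * x.2) • (C x : Set G) = Set.univ := by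
    refine Set.eq_univ_of_forall fun g => ?_
    obtain ⟨_, ⟨s, hs, b, hb, rfl⟩, t, ht, rfl⟩ := h.ge (Set.mem_univ g)
    refine Set.mem_biUnion (x := (s, t)) (Finset.mk_mem_product hs ht) ?_
    refine ⟨MulAut.conj t⁻¹ b, Subgroup.mem_map_of_mem _ hb, ?_⟩
    simp [mul_assoc]
  obtain ⟨x, -, hx⟩ := Subgroup.exists_finiteIndex_of_leftCoset_cover hcover
  exact ⟨(Subgroup.index_map_equiv B (MulAut.conj x.2⁻¹)) ▸ hx.index_ne_zero⟩

end Cosets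

section FreeGroupSubgroups

open scoped Pointwise

variable {α : Type*} {B : Subgroup (FreeGroup α)} {p : List (α × Bool)}

theorem exists_append_mk_notMem_mul_mul [Finite α] [Nontrivial α] (hB : ¬ B.FiniteIndex)
    (S T : Finset (FreeGroup α)) (hp : FreeGroup.IsReduced p) :
    ∃ s, FreeGroup.IsReduced (p ++ s) ∧
      FreeGroup.mk (p ++ s) ∉ (S * B * T : Set (FreeGroup α)) := by
  -- Otherwise every `u` lies in `(p c)⁻¹ S B T` for some letter `c`, so that finitely many double
  -- cosets of `B` cover the group.
  by_contra! hcon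
  have : Fintype α := Fintype.ofFinite α
  let C : Finset (FreeGroup α) := Finset.univ.image fun c => (FreeGroup.mk (p ++ [c]))⁻¹
  refine hB (finiteIndex_of_mul_mul_eq_univ (S := C * S) (T := T) ?_)
  refine Set.eq_univ_of_forall fun u => ?_
  obtain ⟨c, hc⟩ := exists_isReduced_append_cons hp (FreeGroup.isReduced_toWord (x := u))
  have hu : u = (FreeGroup.mk (p ++ [c]))⁻¹ * FreeGroup.mk (p ++ c :: u.toWord) := by
    rw [List.append_cons p c u.toWord, ← FreeGroup.mul_mk (L₁ := p ++ [c]) (L₂ := u.toWord),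
      FreeGroup.mk_toWord, inv_mul_cancel_left]
  rw [hu, Finset.coe_mul, mul_assoc, mul_assoc, ← mul_assoc (S : Set (FreeGroup α))]
  exact Set.mul_mem_mul (Finset.mem_coe.2 (Finset.mem_image_of_mem _ (Finset.mem_univ c)))
    (hcon _ hc)

variable [DecidableEq α]

theorem mk_mem_mul_of_prefix_toWord_mul {T : Set (FreeGroup α)} {x y : FreeGroup α} (hxB : x ∈ B)
    (hx : ∀ q, q <+: x.toWord → FreeGroup.mk q ∈ T)
    (hy : ∀ q, q <+: y.toWord → FreeGroup.mk q ∈ (B * T : Set (FreeGroup α)))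
    (q : List (α × Bool)) (hq : q <+: (x * y).toWord) :
    FreeGroup.mk q ∈ (B * T : Set (FreeGroup α)) := by
  rcases prefix_toWord_mul hq with hqx | ⟨q', hq', hqq'⟩
  · exact ⟨1, one_mem B, _, hx q hqx, one_mul _⟩
  · obtain ⟨b, hb, t, ht, hbt⟩ := hy q' hq'
    exact ⟨x * b, mul_mem hxB hb, t, ht, by rw [hqq', ← hbt]; exact mul_assoc x b t⟩

theorem exists_finset_mk_mem_mul_of_prefix_toWord (hB : B.FG) :
    ∃ T : Finset (FreeGroup α), ∀ b ∈ B, ∀ q, q <+: b.toWord →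
      FreeGroup.mk q ∈ (B * T : Set (FreeGroup α)) := by
  obtain ⟨X, rfl⟩ := hB
  let T : Finset (FreeGroup α) :=
    (insert 1 (X ∪ X⁻¹)).biUnion fun x => (x.toWord.inits.map FreeGroup.mk).toFinset
  have hT {y : FreeGroup α} (hy : y ∈ insert 1 (X ∪ X⁻¹)) (q) (hq : q <+: y.toWord) :
      FreeGroup.mk q ∈ (T : Set (FreeGroup α)) :=
    Finset.mem_biUnion.2 ⟨y, hy, by simpa using ⟨q, hq, rfl⟩⟩
  refine ⟨T, fun b hb => ?_⟩
  induction hb using Subgroup.closure_induction_left with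
  | one => exact fun q hq => ⟨1, one_mem _, _, hT (Finset.mem_insert_self _ _) q hq, one_mul _⟩
  | mul_left x hx y _ ih =>
    exact mk_mem_mul_of_prefix_toWord_mul (Subgroup.subset_closure hx)
      (hT (Finset.mem_insert_of_mem (Finset.mem_union_left _ hx))) ih
  | inv_mul_cancel x hx y _ ih =>
    exact mk_mem_mul_of_prefix_toWord_mul (inv_mem (Subgroup.subset_closure hx))
      (hT (Finset.mem_insert_of_mem (Finset.mem_union_right _ (Finset.inv_mem_inv hx)))) ih

end FreeGroupSubgroups

section Conj

open scoped Pointwise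

variable {n : ℕ} {B : Subgroup (F n)}

theorem coe_conjSub (h : F n) (B : Subgroup (F n)) :
    (conjSub h B : Set (F n)) = {h} * B * {h⁻¹} := by
  ext x
  rw [Set.mul_singleton, Set.singleton_mul, Set.image_image]
  rfl

theorem fg_conjSub (h : F n) (hB : B.FG) : (conjSub h B).FG :=
  (Subgroup.fg_iff_submonoid_fg _).2 (((Subgroup.fg_iff_submonoid_fg _).1 hB).map _)

theorem Malnormal.not_finiteIndex [Nonempty (Fin n)] (hB : Malnormal B) (htop : B ≠ ⊤) :
    ¬ B.FiniteIndex := by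
  intro hfin
  obtain ⟨x, hx⟩ : ∃ x, x ∉ B := by simpa [Subgroup.eq_top_iff'] using htop
  have hconj : (conjSub x B).FiniteIndex :=
    ⟨(Subgroup.index_map_equiv B (MulAut.conj x)) ▸ hfin.index_ne_zero⟩
  have hbot : (⊥ : Subgroup (F n)).FiniteIndex := hB x hx ▸ inferInstance
  have := hbot.index_ne_zero
  rw [Subgroup.index_bot] at this
  exact this Nat.card_eq_zero_of_infinite

end Conj

/-! ### Prefixes of boundary points -/

section BoundaryWords

variable {n : ℕ} {ξ η : Boundary n} {k m : ℕ} {q : List (Letter n)}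

theorem linv_ne (x : Letter n) : linv x ≠ x := fun h => Bool.not_ne_self x.2 (congrArg Prod.snd h)

theorem ne_linv_iff {x y : Letter n} : y ≠ linv x ↔ (x.1 = y.1 → x.2 = y.2) := by
  obtain ⟨x, s⟩ := x
  obtain ⟨y, t⟩ := y
  cases s <;> cases t <;> simp [linv, eq_comm]

theorem isRed_iff_forall_isReduced {ξ : ℕ → Letter n} :
    IsRed ξ ↔ ∀ m, FreeGroup.IsReduced ((List.range m).map ξ) := by
  simp only [IsRed, FreeGroup.IsReduced, List.isChain_iff_getElem, List.getElem_map,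
    List.getElem_range, List.length_map, List.length_range, ne_linv_iff]
  exact ⟨fun h _ i _ => h i, fun h i => h (i + 2) i (Nat.lt_succ_self _)⟩

/-- The boundary point `x x x ⋯`, which continues every finite reduced word ending in `x`. -/
def constPoint (x : Letter n) : Boundary n := ⟨fun _ => x, fun _ => (linv_ne x).symm⟩

/-- The boundary point `ξ k, ξ (k + 1), …` obtained by deleting the first `k` letters of `ξ`, so that
`ξ` is the concatenation of `bpre ξ k` and `tail ξ k`. -/
def tail (ξ : Boundary n) (k : ℕ) : Boundary n := ⟨fun i => ξ.1 (k + i), fun i => ξ.2 (k + i)⟩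

theorem length_bpre (ξ : Boundary n) (m : ℕ) : (bpre ξ m).length = m := by
  rw [bpre, List.length_map, List.length_range]

theorem bpre_add (ξ : Boundary n) (k m : ℕ) :
    bpre ξ (k + m) = bpre ξ k ++ bpre (tail ξ k) m := by
  simp [bpre, tail, List.range_add, Function.comp_def]

theorem bpre_prefix_bpre (ξ : Boundary n) (h : k ≤ m) : bpre ξ k <+: bpre ξ m := by
  obtain ⟨j, rfl⟩ := Nat.exists_eq_add_of_le h
  exact bpre_add ξ k j ▸ List.prefix_append _ _

theorem isReduced_bpre (ξ : Boundary n) (m : ℕ) : FreeGroup.IsReduced (bpre ξ m) :=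
  isRed_iff_forall_isReduced.1 ξ.2 m

theorem rword_mk (hq : FreeGroup.IsReduced q) : rword (FreeGroup.mk q) = q :=
  toWord_mk_of_isReduced hq

theorem bpre_eq_bpre_iff : bpre ξ m = bpre η m ↔ ∀ i < m, ξ.1 i = η.1 i := by
  simp [bpre]

theorem eq_of_mem_head?_bpre {x : Letter n} (hx : x ∈ (bpre ξ m).head?) : x = ξ.1 0 := by
  cases m with
  | zero => simp [bpre] at hx
  | succ m => simpa [bpre, List.range_succ_eq_map, eq_comm] using hx

theorem bpre_length_eq_of_prefix (hq : q <+: bpre ξ m) : bpre ξ q.length = q := by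
  have hqm : q.length ≤ m := length_bpre ξ m ▸ hq.length_le
  obtain ⟨j, rfl⟩ := Nat.exists_eq_add_of_le hqm
  rw [bpre_add] at hq
  exact ((List.prefix_of_prefix_length_le hq (List.prefix_append _ _)
    (length_bpre ξ _).ge).eq_of_length (length_bpre ξ _).symm).symm

theorem eq_of_forall_mk_bpre_eq {k' : ℕ}
    (h : ∀ m, FreeGroup.mk (bpre ξ (k + m)) = FreeGroup.mk (bpre η (k' + m))) : ξ = η := by
  have hword m : bpre ξ (k + m) = bpre η (k' + m) := by
    rw [← rword_mk (isReduced_bpre ξ _), h, rword_mk (isReduced_bpre η _)]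
  obtain rfl : k = k' := by
    simpa only [length_bpre, add_zero] using congrArg List.length (hword 0)
  exact Subtype.ext <| funext fun i => bpre_eq_bpre_iff.1 (hword (i + 1)) i (by omega)

end BoundaryWords

/-! ### The action on the boundary -/

section Action

variable {n : ℕ} {ξ : Boundary n} {g : F n} {l p q u : List (Letter n)} {j m : ℕ}

theorem invRev_bpre_suffix_iff : FreeGroup.invRev (bpre ξ j) <:+ l ↔
    j ≤ l.length ∧ ∀ i < j, l.reverse[i]? = some (linv (ξ.1 i)) := by
  have hrev : (FreeGroup.invRev (bpre ξ j)).reverse = (List.range j).map (linv ∘ ξ.1) := by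
    simp [FreeGroup.invRev, bpre, linv, Function.comp_def]
  rw [← List.reverse_prefix, hrev]
  refine ⟨fun h => ⟨by simpa using h.length_le, ?_⟩, fun h => ?_⟩
  · simpa [List.prefix_iff_getElem?] using h
  · simpa [List.prefix_iff_getElem?] using h.2

theorem isGreatest_cancelLen (l : List (Letter n)) (ξ : Boundary n) :
    IsGreatest {j | FreeGroup.invRev (bpre ξ j) <:+ l} (cancelLen l ξ.1) := by
  simp only [cancelLen, ← invRev_bpre_suffix_iff]
  have hbdd : BddAbove {j | FreeGroup.invRev (bpre ξ j) <:+ l} :=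
    ⟨l.length, fun j hj => (invRev_bpre_suffix_iff.1 hj).1⟩
  exact ⟨Nat.sSup_mem ⟨0, List.nil_suffix⟩ hbdd, fun j hj => le_csSup hbdd hj⟩

theorem exists_rword_eq_append_invRev_bpre (g : F n) (ξ : Boundary n) :
    ∃ p, rword g = p ++ FreeGroup.invRev (bpre ξ (cancelLen (rword g) ξ.1)) ∧
      ∀ m, FreeGroup.IsReduced (p ++ bpre (tail ξ (cancelLen (rword g) ξ.1)) m) := by
  obtain ⟨hmem, hmax⟩ := isGreatest_cancelLen (rword g) ξ
  set c := cancelLen (rword g) ξ.1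
  obtain ⟨p, hp⟩ := hmem
  have hpred : FreeGroup.IsReduced p :=
    FreeGroup.isReduced_toWord.infix (hp ▸ (List.prefix_append p _).isInfix)
  refine ⟨p, hp.symm, fun m => List.isChain_append.2 ⟨hpred, isReduced_bpre _ m, ?_⟩⟩
  intro x hx y hy
  obtain rfl : y = ξ.1 c := eq_of_mem_head?_bpre hy
  refine ne_linv_iff.1 fun hcancel => ?_
  obtain ⟨p', rfl⟩ := List.getLast?_eq_some_iff.1 hx
  have hlonger : FreeGroup.invRev (bpre ξ (c + 1)) <:+ rword g := by
    refine ⟨p', ?_⟩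
    have hx' : FreeGroup.invRev (bpre (tail ξ c) 1) = [x] := by
      simp [bpre, tail, FreeGroup.invRev, hcancel, linv]
    rw [bpre_add, FreeGroup.invRev_append, hx', ← hp, List.append_assoc]
  exact (hmax hlonger).not_gt c.lt_succ_self

theorem map_range_actSeq (hp : rword g = p ++ FreeGroup.invRev (bpre ξ (cancelLen (rword g) ξ.1)))
    (m : ℕ) : (List.range (p.length + m)).map (actSeq g ξ.1) =
      p ++ bpre (tail ξ (cancelLen (rword g) ξ.1)) m := by
  have hlen : (rword g).length - cancelLen (rword g) ξ.1 = p.length := by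
    rw [congrArg List.length hp, List.length_append, FreeGroup.invRev_length, length_bpre,
      Nat.add_sub_cancel]
  rw [List.range_add, List.map_append, List.map_map]
  congr 1
  · refine List.ext_getElem (by simp) fun i hi _ => ?_
    have hip : i < p.length := by simpa using hi
    simp [actSeq, hlen, hip, List.getElem_of_eq hp]
  · simp [bpre, tail, actSeq, hlen, add_comm]

theorem isRed_actSeq (g : F n) (ξ : Boundary n) : IsRed (actSeq g ξ.1) := by
  obtain ⟨p, hp, hred⟩ := exists_rword_eq_append_invRev_bpre g ξ
  refine isRed_iff_forall_isReduced.2 fun m => (hred m).infix (List.IsPrefix.isInfix ?_)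
  rw [← map_range_actSeq hp, Nat.add_comm, List.range_add, List.map_append]
  exact List.prefix_append _ _

theorem exists_mk_bpre_bAct (g : F n) (ξ : Boundary n) :
    ∃ k c, ∀ m, FreeGroup.mk (bpre (bAct g ξ) (k + m)) = g * FreeGroup.mk (bpre ξ (c + m)) := by
  obtain ⟨p, hp, -⟩ := exists_rword_eq_append_invRev_bpre g ξ
  refine ⟨p.length, cancelLen (rword g) ξ.1, fun m => ?_⟩
  have hword : bpre (bAct g ξ) (p.length + m) = _ :=
    (congrArg (bpre · _) (dif_pos (isRed_actSeq g ξ))).trans (map_range_actSeq hp m)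
  have hg : g = FreeGroup.mk p * (FreeGroup.mk (bpre ξ (cancelLen (rword g) ξ.1)))⁻¹ := by
    rw [FreeGroup.inv_mk, FreeGroup.mul_mk, ← hp, rword, FreeGroup.mk_toWord]
  rw [hword, bpre_add, ← FreeGroup.mul_mk, ← FreeGroup.mul_mk]
  nth_rw 2 [hg]
  group

theorem bAct_injective (g : F n) : Function.Injective (bAct g) := by
  intro ξ η h
  obtain ⟨k, c, hξ⟩ := exists_mk_bpre_bAct g ξ
  obtain ⟨k', c', hη⟩ := exists_mk_bpre_bAct g η
  refine eq_of_forall_mk_bpre_eq (k := c + k') (k' := c' + k) fun m => mul_left_cancel (a := g) ?_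
  rw [add_assoc, add_assoc, ← hξ, ← hη, h, add_left_comm]

theorem bpre_bAct_of_eventually_prefix
    (h : ∀ᶠ m in Filter.atTop, q <+: rword (g * FreeGroup.mk (bpre ξ m))) :
    bpre (bAct g ξ) q.length = q := by
  obtain ⟨k, c, hkc⟩ := exists_mk_bpre_bAct g ξ
  obtain ⟨M, hM⟩ := Filter.eventually_atTop.1 h
  have hq := hM (c + M) (Nat.le_add_left M c)
  rw [← hkc, rword_mk (isReduced_bpre _ _)] at hq
  exact bpre_length_eq_of_prefix hq

theorem bpre_bAct_mk (h : ∀ m, FreeGroup.IsReduced (q ++ bpre ξ m)) :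
    bpre (bAct (FreeGroup.mk q) ξ) q.length = q := by
  refine bpre_bAct_of_eventually_prefix (Filter.Eventually.of_forall fun m => ?_)
  rw [FreeGroup.mul_mk, rword_mk (h m)]
  exact List.prefix_append _ _

theorem bpre_bAct_of_bpre_eq_append (hpu : FreeGroup.IsReduced (p ++ u)) (hu : u ≠ [])
    (hξ : bpre ξ m = l ++ u) :
    bpre (bAct (FreeGroup.mk p * (FreeGroup.mk l)⁻¹) ξ) (p ++ u).length = p ++ u := by
  refine bpre_bAct_of_eventually_prefix (Filter.eventually_atTop.2 ⟨m, fun j hj => ?_⟩)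
  obtain ⟨j, rfl⟩ := Nat.exists_eq_add_of_le hj
  have hword : bpre ξ (m + j) = l ++ (u ++ bpre (tail ξ m) j) := by
    rw [bpre_add, hξ, List.append_assoc]
  have hred : FreeGroup.IsReduced (p ++ u ++ bpre (tail ξ m) j) :=
    hpu.append_overlap ((isReduced_bpre ξ (m + j)).infix
      (hword ▸ (List.suffix_append _ _).isInfix)) hu
  rw [hword, ← FreeGroup.mul_mk, mul_assoc, inv_mul_cancel_left, FreeGroup.mul_mk,
    ← List.append_assoc, rword_mk hred]
  exact List.prefix_append _ _

theorem exists_bpre_length_eq [Nonempty (Fin n)] (hl : FreeGroup.IsReduced l) :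
    ∃ ξ : Boundary n, bpre ξ l.length = l := by
  rcases eq_or_ne l [] with rfl | hne
  · exact ⟨constPoint (Classical.arbitrary _), rfl⟩
  · refine ⟨bAct (FreeGroup.mk l) (constPoint (l.getLast hne)), bpre_bAct_mk fun m => ?_⟩
    have hconst : bpre (constPoint (l.getLast hne)) m = List.replicate m (l.getLast hne) := by
      simp [bpre, constPoint]
    exact hconst ▸ isReduced_append_replicate_getLast hl hne m

end Action

/-! ### Topology of the boundary -/

section Topology

variable {n : ℕ}

instance : T2Space (Boundary n) := inferInstanceAs (T2Space {ξ : ℕ → Letter n // IsRed ξ})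

instance : CompactSpace (Boundary n) := by
  have hclosed : IsClosed {ξ : ℕ → Letter n | IsRed ξ} := by
    simp only [IsRed, Set.ofPred_forall]
    refine isClosed_iInter fun i => ?_
    have hcont : Continuous fun ξ : ℕ → Letter n => (ξ (i + 1), ξ i) := by fun_prop
    exact (isClosed_discrete {x : Letter n × Letter n | x.1 ≠ linv x.2}).preimage hcont
  exact isCompact_iff_compactSpace.1 hclosed.isCompact

theorem isOpen_setOf_bpre (P : List (Letter n) → Prop) (m : ℕ) :
    IsOpen {ξ : Boundary n | P (bpre ξ m)} := by
  have hcont : Continuous fun (ξ : Boundary n) (i : Fin m) => ξ.1 i :=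
    continuous_pi fun i => (continuous_apply (i : ℕ)).comp continuous_subtype_val
  have hbpre (ξ : Boundary n) : bpre ξ m = List.ofFn fun i : Fin m => ξ.1 i := by
    rw [bpre, List.ofFn_eq_map, ← List.map_coe_finRange_eq_range, List.map_map]
    rfl
  simp only [hbpre]
  exact (isOpen_discrete {f : Fin m → Letter n | P (List.ofFn f)}).preimage hcont

theorem hasAntitoneBasis_nhds (ξ : Boundary n) :
    (nhds ξ).HasAntitoneBasis fun m => {α | bpre α m = bpre ξ m} := by
  refine ⟨Filter.hasBasis_iff.2 fun U => ⟨fun hU => ?_, ?_⟩, fun k m hkm α hα => ?_⟩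
  · obtain ⟨V, hV, hVU⟩ := (mem_nhds_induced _ _ _).1 hU
    obtain ⟨_, ⟨x, m, rfl⟩, hξ, hxV⟩ :=
      (PiNat.isTopologicalBasis_cylinders fun _ => Letter n).mem_nhds_iff.1 hV
    rw [← PiNat.mem_cylinder_iff_eq.1 hξ] at hxV
    exact ⟨m, trivial, fun α hα => hVU (hxV (bpre_eq_bpre_iff.1 hα))⟩
  · rintro ⟨m, -, hm⟩
    exact Filter.mem_of_superset ((isOpen_setOf_bpre (· = bpre ξ m) m).mem_nhds rfl) hm
  · exact bpre_eq_bpre_iff.2 fun i hi => bpre_eq_bpre_iff.1 hα i (hi.trans_le hkm)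

end Topology

/-! ### Generic boundary points -/

section Generic

open scoped Pointwise

variable {n : ℕ} {ξ η : Boundary n} {B : Subgroup (F n)}

theorem eventually_residual_frequently_bpre {P : List (Letter n) → Prop}
    (hP : ∀ p, FreeGroup.IsReduced p → ∃ s, FreeGroup.IsReduced (p ++ s) ∧ P (p ++ s)) :
    ∀ᶠ ξ in residual (Boundary n), ∃ᶠ m in Filter.atTop, P (bpre ξ m) := by
  simp only [Filter.frequently_atTop]
  refine eventually_countable_forall.2 fun k => ?_
  refine residual_of_dense_open ?_ ?_
  · have hunion : {ξ : Boundary n | ∃ m ≥ k, P (bpre ξ m)} =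
        ⋃ m ≥ k, {ξ : Boundary n | P (bpre ξ m)} := by ext; simp
    exact hunion ▸ isOpen_biUnion fun m _ => isOpen_setOf_bpre P m
  · intro ξ
    have : Nonempty (Fin n) := ⟨(ξ.1 0).1⟩
    refine (mem_closure_iff_nhds_basis (hasAntitoneBasis_nhds ξ).toHasBasis).2 fun m _ => ?_
    obtain ⟨s, hs, hPs⟩ := hP (bpre ξ (m + k)) (isReduced_bpre ξ _)
    obtain ⟨α, hα⟩ := exists_bpre_length_eq hs
    have hprefix : bpre ξ m <+: bpre α _ :=
      hα.symm ▸ (bpre_prefix_bpre ξ (Nat.le_add_right m k)).trans (List.prefix_append _ s)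
    have hαξ : bpre α m = bpre ξ m := by
      simpa only [length_bpre] using bpre_length_eq_of_prefix hprefix
    refine ⟨α, ⟨(bpre ξ (m + k) ++ s).length, ?_, hα.symm ▸ hPs⟩, hαξ⟩
    rw [List.length_append, length_bpre]
    omega

/-- A boundary point is disjunctive if every finite reduced word occurs in it as a subword,
that is, ends one of its prefixes. -/
def IsDisjunctive (ξ : Boundary n) : Prop :=
  ∀ w, FreeGroup.IsReduced w → ∃ m, w <:+ bpre ξ m

/-- A boundary point escapes `B` if its prefixes, seen as vertices of the Cayley tree, leave every
finite union of double cosets `sBt` infinitely often. Compared with avoiding the limit sets of the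
conjugates of `B`, this condition is visibly invariant under translation and conjugation. -/
def Escapes (B : Subgroup (F n)) (ξ : Boundary n) : Prop :=
  ∀ S T : Finset (F n), ∃ᶠ m in Filter.atTop, FreeGroup.mk (bpre ξ m) ∉ (S * B * T : Set (F n))

theorem eventually_residual_isDisjunctive [Nontrivial (Fin n)] :
    ∀ᶠ ξ in residual (Boundary n), IsDisjunctive ξ := by
  refine eventually_countable_forall.2 fun w => ?_
  by_cases hw : FreeGroup.IsReduced w
  · have hext p (hp : FreeGroup.IsReduced p) :
        ∃ s, FreeGroup.IsReduced (p ++ s) ∧ w <:+ p ++ s := by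
      obtain ⟨c, hc⟩ := exists_isReduced_append_cons hp hw
      exact ⟨c :: w, hc, ⟨p ++ [c], by simp⟩⟩
    exact (eventually_residual_frequently_bpre hext).mono fun ξ hξ _ => hξ.exists
  · exact Filter.Eventually.of_forall fun ξ h => absurd h hw

theorem eventually_residual_escapes [Nontrivial (Fin n)] (hB : ¬ B.FiniteIndex) :
    ∀ᶠ ξ in residual (Boundary n), Escapes B ξ :=
  eventually_countable_forall.2 fun S => eventually_countable_forall.2 fun T =>
    eventually_residual_frequently_bpre (P := fun q => FreeGroup.mk q ∉ (S * B * T : Set (F n)))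
      fun _ hp => exists_append_mk_notMem_mul_mul hB S T hp

theorem Escapes.bAct (hξ : Escapes B ξ) (g : F n) : Escapes B (bAct g ξ) := by
  intro S T
  obtain ⟨k, c, hkc⟩ := exists_mk_bpre_bAct g ξ
  have := hξ ({g⁻¹} * S) T
  rw [Filter.frequently_atTop] at this ⊢
  intro M
  obtain ⟨m, hm, hnot⟩ := this (c + M)
  obtain ⟨j, rfl⟩ := Nat.exists_eq_add_of_le hm
  refine ⟨k + (M + j), by omega, fun h => hnot ?_⟩
  have hmem := Set.mul_mem_mul (Set.mem_singleton g⁻¹) (hkc (M + j) ▸ h)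
  simpa only [Finset.coe_mul, Finset.coe_singleton, mul_assoc, inv_mul_cancel_left,
    add_assoc] using hmem

theorem Escapes.conjSub (hξ : Escapes B ξ) (h : F n) : Escapes (conjSub h B) ξ := by
  intro S T
  simpa only [coe_conjSub, Finset.coe_mul, Finset.coe_singleton, mul_assoc]
    using hξ (S * {h}) ({h⁻¹} * T)

theorem Escapes.notMem_limitSet (hξ : Escapes B ξ) (hB : B.FG) : ξ ∉ limitSet B := by
  intro hlim
  obtain ⟨T, hT⟩ := exists_finset_mk_mem_mul_of_prefix_toWord hB
  obtain ⟨m, hm⟩ := (hξ 1 T).exists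
  obtain ⟨b, hb, hbm⟩ := hlim m
  exact hm (by simpa using hT b hb _ hbm)

theorem mk_mem_relSet {r : ℕ} {A : Fin r → Subgroup (F n)} (hfg : ∀ i, (A i).FG) (hne : ξ ≠ η)
    (hξ : ∀ i, Escapes (A i) ξ) : s(ξ, η) ∈ relSet A := by
  refine ⟨hne, ?_⟩
  rintro ⟨i, g, ξ', η', hz, hξ', hη'⟩
  have hlim : ξ ∈ limitSet (RelCurr.conjSub g (A i)) := by
    rcases Sym2.eq_iff.1 hz with ⟨rfl, -⟩ | ⟨rfl, -⟩ <;> assumption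
  exact ((hξ i).conjSub g).notMem_limitSet (fg_conjSub g (hfg i)) hlim

end Generic

/-! ### Dense orbits -/

section Density

variable {n : ℕ} {ξ η α β : Boundary n} {p u v : List (Letter n)}

-- If `ξ` starts with `a v⁻¹ u`, then `g = p v a⁻¹` sends it to a point starting with `p u`, while
-- nothing cancels in `g η = p v a⁻¹ η`, because `ξ` and `η` start with different letters.
theorem exists_bpre_bAct_eq (hξ : IsDisjunctive ξ) (h0 : ξ.1 0 ≠ η.1 0)
    (hpu : FreeGroup.IsReduced (p ++ u)) (hpv : FreeGroup.IsReduced (p ++ v)) (hu : u ≠ [])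
    (hv : v ≠ []) (hvu : ∀ x ∈ v.head?, ∀ y ∈ u.head?, x ≠ y) :
    ∃ g, bpre (bAct g ξ) (p ++ u).length = p ++ u ∧ bpre (bAct g η) (p ++ v).length = p ++ v := by
  have hw : FreeGroup.IsReduced (FreeGroup.invRev v ++ u) :=
    isReduced_invRev_append (hpv.infix (List.suffix_append p v).isInfix)
      (hpu.infix (List.suffix_append p u).isInfix) hvu
  obtain ⟨m, a, ha⟩ := hξ _ hw
  have hξm : bpre ξ m = (a ++ FreeGroup.invRev v) ++ u := by rw [← ha, List.append_assoc]
  refine ⟨FreeGroup.mk p * (FreeGroup.mk (a ++ FreeGroup.invRev v))⁻¹,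
    bpre_bAct_of_bpre_eq_append hpu hu hξm, ?_⟩
  have hl : bpre ξ (a ++ FreeGroup.invRev v).length = a ++ FreeGroup.invRev v :=
    bpre_length_eq_of_prefix (hξm ▸ List.prefix_append _ _)
  have hinv : FreeGroup.invRev (a ++ FreeGroup.invRev v) = v ++ FreeGroup.invRev a := by
    rw [FreeGroup.invRev_append, FreeGroup.invRev_invRev]
  have hred j : FreeGroup.IsReduced (v ++ (FreeGroup.invRev a ++ bpre η j)) := by
    rw [← List.append_assoc, ← hinv, ← hl]
    exact isReduced_invRev_append (isReduced_bpre ξ _) (isReduced_bpre η j) fun x hx y hy => by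
      rwa [eq_of_mem_head?_bpre hx, eq_of_mem_head?_bpre hy]
  have hη := bpre_bAct_mk (ξ := η) (q := p ++ v ++ FreeGroup.invRev a) fun j =>
    List.append_assoc _ _ _ ▸ hpv.append_overlap (hred j) hv
  rw [FreeGroup.inv_mk, hinv, FreeGroup.mul_mk, ← List.append_assoc]
  exact bpre_length_eq_of_prefix (hη ▸ List.prefix_append _ _)

theorem mem_closure_range_bAct (hξ : IsDisjunctive ξ) (h0 : ξ.1 0 ≠ η.1 0) (hαβ : α ≠ β) :
    (α, β) ∈ closure (Set.range fun g => (bAct g ξ, bAct g η)) := by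
  have hval : α.1 ≠ β.1 := fun h => hαβ (Subtype.ext h)
  set d := PiNat.firstDiff α.1 β.1
  have hpre : bpre α d = bpre β d :=
    bpre_eq_bpre_iff.2 fun i hi => PiNat.apply_eq_of_lt_firstDiff hi
  have hdiff : β.1 d ≠ α.1 d := (PiNat.apply_firstDiff_ne hval).symm
  have hbasis := (hasAntitoneBasis_nhds α).prod (hasAntitoneBasis_nhds β)
  rw [← nhds_prod_eq] at hbasis
  refine (mem_closure_iff_nhds_basis hbasis.toHasBasis).2 fun k _ => ?_
  have hα : bpre α (d + (k + 1)) = bpre α d ++ bpre (tail α d) (k + 1) := bpre_add α d _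
  have hβ : bpre β (d + (k + 1)) = bpre α d ++ bpre (tail β d) (k + 1) := hpre ▸ bpre_add β d _
  have hne (ζ : Boundary n) : bpre ζ (k + 1) ≠ [] :=
    List.ne_nil_of_length_pos ((length_bpre ζ _).symm ▸ k.succ_pos)
  obtain ⟨g, hgξ, hgη⟩ := exists_bpre_bAct_eq hξ h0 (hα ▸ isReduced_bpre α _)
    (hβ ▸ isReduced_bpre β _) (hne _) (hne _) fun x hx y hy => by
      rwa [eq_of_mem_head?_bpre hx, eq_of_mem_head?_bpre hy]
  rw [← hα, length_bpre] at hgξ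
  rw [← hβ, length_bpre] at hgη
  exact ⟨_, ⟨g, rfl⟩, hbasis.antitone (by omega : k ≤ d + (k + 1)) ⟨hgξ, hgη⟩⟩

theorem dense_setOf_eq_dbAct {r : ℕ} {A : Fin r → Subgroup (F n)} (hξ : IsDisjunctive ξ)
    (h0 : ξ.1 0 ≠ η.1 0) (hA : ∀ g, dbAct g s(ξ, η) ∈ relSet A) :
    Dense {y : ↥(relSet A) | ∃ g : F n, (y : Sym2 (Boundary n)) = dbAct g s(ξ, η)} := by
  rw [Subtype.dense_iff]
  rintro z hz
  induction z using Sym2.inductionOn with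
  | hf α β =>
    have hcont : Continuous fun x : Boundary n × Boundary n => s(x.1, x.2) := continuous_quot_mk
    have hmaps : Set.MapsTo (fun x : Boundary n × Boundary n => s(x.1, x.2))
        (Set.range fun g => (bAct g ξ, bAct g η))
        (Subtype.val '' {y : ↥(relSet A) | ∃ g : F n, y.1 = dbAct g s(ξ, η)}) := by
      rintro _ ⟨g, rfl⟩
      exact ⟨⟨dbAct g s(ξ, η), hA g⟩, ⟨g, rfl⟩, rfl⟩
    exact hmaps.closure hcont (mem_closure_range_bAct hξ h0 hz.1)

end Density

theorem statement_7_general (n r : ℕ) (hn : 2 ≤ n) (A : Fin r → Subgroup (F n))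
    (hfg : ∀ i, (A i).FG) (hA : ∀ i, ¬ (A i).FiniteIndex) :
    ∃ z : ↥(relSet A),
      Dense {y : ↥(relSet A) | ∃ g : F n, (y : Sym2 (Boundary n)) = dbAct g ↑z} := by
  have : Nontrivial (Fin n) := Fin.nontrivial_iff_two_le.2 hn
  have : Nonempty (Boundary n) := ⟨constPoint (Classical.arbitrary _)⟩
  obtain ⟨ξ, hdisj, hesc⟩ := (dense_of_mem_residual (eventually_residual_isDisjunctive.and
    (Filter.eventually_all.2 fun i => eventually_residual_escapes (hA i)))).nonempty
  let η : Boundary n := constPoint (linv (ξ.1 0))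
  have h0 : ξ.1 0 ≠ η.1 0 := (linv_ne _).symm
  have hne : ξ ≠ η := fun h => h0 (congrArg (fun ζ => ζ.1 0) h)
  have hrel g : dbAct g s(ξ, η) ∈ relSet A :=
    mk_mem_relSet hfg ((bAct_injective g).ne hne) fun i => (hesc i).bAct g
  exact ⟨⟨s(ξ, η), mk_mem_relSet hfg hne hesc⟩, dense_setOf_eq_dbAct hdisj h0 hrel⟩

/-- The action of F_n on ∂²(F_n,𝒜) has a dense orbit. -/
theorem statement_7 (n r : ℕ) (hn : 2 ≤ n) (A : Fin r → Subgroup (F n))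
    (hsys : IsSystem A) (hmal : SystemMalnormal A) :
    ∃ z : ↥(relSet A),
      Dense { y : ↥(relSet A) | ∃ g : F n, (y : Sym2 (Boundary n)) = dbAct g ↑z } := by
  have : Nonempty (Fin n) := ⟨⟨0, by omega⟩⟩
  exact statement_7_general n r hn A hsys.1 fun i => (hmal.1 i).not_finiteIndex (hsys.2.2 i)

end RelCurr
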